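/- If (X_n) is G-c.i.d. and f, f² are integrable at X_1 (E|f(X_1)| < ∞ and E[f(X_1)²] < ∞), then B_n = n^{-1/2} Σ_{k=1}^n (f(X_k) − E[f(X_k)|G_{k-1}]) converges stably with representing measure N(0, V_{f²} − (V_f)²). -/

import Mathlib

open MeasureTheory ProbabilityTheory Filter

/-- `(X n)` (indexed from 1) is conditionally identically distributed with respect to `𝒢`. -/
def IsCID {Ω E : Type*} {mΩ : MeasurableSpace Ω} [MeasurableSpace E]
    (μ : Measure Ω) (𝒢 : Filtration ℕ mΩ) (X : ℕ → Ω → E) : Prop :=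
  ∀ (f : E → ℝ), Measurable f → (∃ C, ∀ x, |f x| ≤ C) →
    ∀ n k : ℕ, n < k →
      μ[(fun ω => f (X k ω)) | 𝒢 n] =ᵐ[μ] μ[(fun ω => f (X (n + 1) ω)) | 𝒢 n]

/-- `(W n)` converges stably with representing measure `ω ↦ N(0, L ω)`. -/
def StableGaussLimit {Ω : Type*} {mΩ : MeasurableSpace Ω}
    (μ : Measure Ω) (W : ℕ → Ω → ℝ) (L : Ω → ℝ) : Prop :=
  ∀ H : Set Ω, MeasurableSet H → μ H ≠ 0 →
    ∀ g : BoundedContinuousFunction ℝ ℝ,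
      Tendsto (fun n => ∫ ω, g (W n ω) ∂μ[|H]) atTop
        (nhds (∫ ω, ∫ x, g x ∂(gaussianReal 0 (L ω).toNNReal) ∂μ[|H]))

/-
Let `S n` be the sum of the rescaled martingale differences and `V n` its predictable variation.
The compensated characteristic function `exp (i S n + V n / 2)` fails to be a martingale only by an
error governed by the conditional Lindeberg sums. It is unbounded, so the array is first stopped
when the variation exceeds a level `K`; since the limit of the variation is finite almost
everywhere, letting `K → ∞` costs nothing. The compensated function then converges to `1` against
every weight measurable for some `𝒢 m`, because the first `m` entries of each row are negligible,
and a density argument extends this to all integrable weights. Taking the weight `exp (-L / 2)` on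
an event `H` yields the conditional characteristic functions of the stable limit. Conditional
identity in distribution enters through the uniform square integrability of the summands.
-/

section Taylor

lemma norm_cexp_mul_I_sub_taylor_le (x : ℝ) :
    ‖Complex.exp (x * Complex.I) - (1 + x * Complex.I - x ^ 2 / 2)‖ ≤
      4 * min (x ^ 2) (|x| ^ 3) := by
  rcases le_total |x| 1 with hx | hx
  · have hmin : min (x ^ 2) (|x| ^ 3) = |x| ^ 3 := by
      rw [← sq_abs]
      exact min_eq_right (pow_le_pow_of_le_one (abs_nonneg x) hx (by norm_num))
    have htaylor := Complex.exp_bound (x := x * Complex.I) (by simpa using hx)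
      (n := 3) (by norm_num)
    have hsum : ∑ k ∈ Finset.range 3, (x * Complex.I) ^ k / (k.factorial : ℂ) =
        1 + x * Complex.I - x ^ 2 / 2 := by
      simp only [Finset.sum_range_succ, Finset.sum_range_zero, Nat.factorial, mul_pow,
        Complex.I_sq]
      push_cast
      ring
    rw [hsum, norm_mul, Complex.norm_I, mul_one, Complex.norm_real, Real.norm_eq_abs] at htaylor
    rw [hmin]
    refine htaylor.trans ?_
    rw [mul_comm 4]
    gcongr
    norm_num [Nat.factorial]
  · have hmin : min (x ^ 2) (|x| ^ 3) = |x| ^ 2 := by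
      rw [← sq_abs]
      exact min_eq_left (pow_le_pow_right₀ hx (by norm_num))
    have hnorm : ‖(x : ℂ) ^ 2 / 2‖ = |x| ^ 2 / 2 := by simp
    have hlin : ‖(1 : ℂ) + x * Complex.I‖ ≤ 1 + |x| := by
      simpa using norm_add_le (1 : ℂ) (x * Complex.I)
    have htri := norm_sub_le (Complex.exp (x * Complex.I)) (1 + x * Complex.I - x ^ 2 / 2)
    have htri' := norm_sub_le (1 + x * Complex.I) ((x : ℂ) ^ 2 / 2)
    rw [Complex.norm_exp_ofReal_mul_I] at htri
    rw [hmin]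
    nlinarith

/-- The first order Taylor remainder of `s ↦ exp (-s / 2)` at `0`. -/
noncomputable def expNegHalfRemainder (s : ℝ) : ℝ := Real.exp (-(s / 2)) - (1 - s / 2)

lemma expNegHalfRemainder_nonneg (s : ℝ) : 0 ≤ expNegHalfRemainder s :=
  sub_nonneg.2 (Real.one_sub_le_exp_neg _)

lemma continuous_expNegHalfRemainder : Continuous expNegHalfRemainder := by
  unfold expNegHalfRemainder
  fun_prop

lemma convexOn_expNegHalfRemainder : ConvexOn ℝ Set.univ expNegHalfRemainder := by
  have hexp := convexOn_exp.comp_linearMap (LinearMap.mulLeft ℝ (-2⁻¹ : ℝ))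
  have hlin := (concaveOn_const (1 : ℝ) convex_univ).sub
    ((LinearMap.mulLeft ℝ (2⁻¹ : ℝ)).convexOn convex_univ)
  refine (hexp.sub hlin).congr fun s _ => ?_
  simp [expNegHalfRemainder, div_eq_inv_mul]

lemma expNegHalfRemainder_sq_le (x : ℝ) :
    expNegHalfRemainder (x ^ 2) ≤ min (x ^ 2) (|x| ^ 3) := by
  have hle : expNegHalfRemainder (x ^ 2) ≤ x ^ 2 := by
    have := Real.exp_le_one_iff.2 (neg_nonpos.2 (by positivity : 0 ≤ x ^ 2 / 2))
    unfold expNegHalfRemainder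
    linarith [sq_nonneg x]
  refine le_min hle ?_
  rcases le_total |x| 1 with hx | hx
  · have hx_sq : |-(x ^ 2 / 2)| ≤ 1 := by
      rw [abs_neg, abs_of_nonneg (by positivity), ← sq_abs]
      nlinarith [abs_nonneg x]
    calc expNegHalfRemainder (x ^ 2) = Real.exp (-(x ^ 2 / 2)) - 1 - -(x ^ 2 / 2) := by
          unfold expNegHalfRemainder
          ring
      _ ≤ (-(x ^ 2 / 2)) ^ 2 := (le_abs_self _).trans (Real.abs_exp_sub_one_sub_id_le hx_sq)
      _ = |x| ^ 3 * (|x| / 4) := by rw [← sq_abs x]; ring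
      _ ≤ |x| ^ 3 := mul_le_of_le_one_right (by positivity) (by linarith)
  · calc expNegHalfRemainder (x ^ 2) ≤ |x| ^ 2 := by rwa [sq_abs]
      _ ≤ |x| ^ 3 := pow_le_pow_right₀ hx (by norm_num)

end Taylor

section OneStep

variable {Ω : Type*} {m mΩ : MeasurableSpace Ω} {μ : Measure Ω} {D : Ω → ℝ}

lemma integrable_min_sq_abs_cube (hD : MemLp D 2 μ) :
    Integrable (fun ω => min (D ω ^ 2) (|D ω| ^ 3)) μ := by
  have hmeas := hD.aestronglyMeasurable
  refine hD.integrable_sq.mono' ((hmeas.pow 2).inf (hmeas.norm.pow 3)) (.of_forall fun ω => ?_)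
  rw [Real.norm_of_nonneg (by positivity)]
  exact min_le_left _ _

lemma integrable_expNegHalfRemainder_sq (hD : MemLp D 2 μ) :
    Integrable (fun ω => expNegHalfRemainder (D ω ^ 2)) μ := by
  refine (integrable_min_sq_abs_cube hD).mono'
    (continuous_expNegHalfRemainder.comp_aestronglyMeasurable hD.integrable_sq.1)
    (.of_forall fun ω => ?_)
  rw [Real.norm_of_nonneg (expNegHalfRemainder_nonneg _)]
  exact expNegHalfRemainder_sq_le _

variable [IsFiniteMeasure μ]

lemma integral_mul_ofReal_condExp (hm : m ≤ mΩ) {B : Ω → ℂ} (hB : StronglyMeasurable[m] B)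
    {K : ℝ} (hBK : ∀ᵐ ω ∂μ, ‖B ω‖ ≤ K) {g : Ω → ℝ} (hg : Integrable g μ) :
    ∫ ω, B ω * (μ[g | m] ω : ℂ) ∂μ = ∫ ω, B ω * (g ω : ℂ) ∂μ := by
  have hBg : Integrable (fun ω => B ω * (g ω : ℂ)) μ :=
    hg.ofReal.bdd_mul (hB.mono hm).aestronglyMeasurable hBK
  have hpull := condExp_bilin_of_stronglyMeasurable_left (μ := μ)
    (ContinuousLinearMap.lsmul ℝ ℝ (E := ℂ)).flip hB (g := g)
    (by simpa [mul_comm] using hBg) hg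
  rw [← integral_condExp hm (f := fun ω => B ω * (g ω : ℂ))]
  refine integral_congr_ae ?_
  simpa [mul_comm, EventuallyEq] using hpull.symm

lemma expNegHalfRemainder_condExp_sq_le (hm : m ≤ mΩ) (hD : MemLp D 2 μ) :
    (fun ω => expNegHalfRemainder (μ[fun ω => D ω ^ 2 | m] ω)) ≤ᵐ[μ]
      μ[fun ω => expNegHalfRemainder (D ω ^ 2) | m] :=
  convexOn_expNegHalfRemainder.map_condExp_le_univ hm
    continuous_expNegHalfRemainder.lowerSemicontinuous hD.integrable_sq
    (integrable_expNegHalfRemainder_sq hD)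

lemma integrable_expNegHalfRemainder_condExp_sq (hm : m ≤ mΩ) (hD : MemLp D 2 μ) :
    Integrable (fun ω => expNegHalfRemainder (μ[fun ω => D ω ^ 2 | m] ω)) μ := by
  refine Integrable.mono' (g := μ[fun ω => expNegHalfRemainder (D ω ^ 2) | m]) integrable_condExp
    (continuous_expNegHalfRemainder.comp_aestronglyMeasurable integrable_condExp.1) ?_
  filter_upwards [expNegHalfRemainder_condExp_sq_le hm hD] with ω hω
  rwa [Real.norm_of_nonneg (expNegHalfRemainder_nonneg _)]

lemma integral_expNegHalfRemainder_condExp_sq_le (hm : m ≤ mΩ) (hD : MemLp D 2 μ) :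
    ∫ ω, expNegHalfRemainder (μ[fun ω => D ω ^ 2 | m] ω) ∂μ ≤
      ∫ ω, min (D ω ^ 2) (|D ω| ^ 3) ∂μ :=
  calc ∫ ω, expNegHalfRemainder (μ[fun ω => D ω ^ 2 | m] ω) ∂μ
      ≤ ∫ ω, μ[fun ω => expNegHalfRemainder (D ω ^ 2) | m] ω ∂μ :=
        integral_mono_ae (integrable_expNegHalfRemainder_condExp_sq hm hD) integrable_condExp
          (expNegHalfRemainder_condExp_sq_le hm hD)
    _ = ∫ ω, expNegHalfRemainder (D ω ^ 2) ∂μ := integral_condExp hm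
    _ ≤ ∫ ω, min (D ω ^ 2) (|D ω| ^ 3) ∂μ :=
        integral_mono (integrable_expNegHalfRemainder_sq hD) (integrable_min_sq_abs_cube hD)
          fun _ => expNegHalfRemainder_sq_le _

lemma integral_mul_taylor_eq_zero (hm : m ≤ mΩ) (hD : MemLp D 2 μ) (hD_zero : μ[D | m] =ᵐ[μ] 0)
    {B : Ω → ℂ} (hB : StronglyMeasurable[m] B) {K : ℝ} (hBK : ∀ᵐ ω ∂μ, ‖B ω‖ ≤ K) :
    Integrable (fun ω => B ω * (D ω * Complex.I - D ω ^ 2 / 2 +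
      μ[fun ω => D ω ^ 2 | m] ω / 2)) μ ∧
    ∫ ω, B ω * (D ω * Complex.I - D ω ^ 2 / 2 + μ[fun ω => D ω ^ 2 | m] ω / 2) ∂μ = 0 := by
  have hB_mul {g : Ω → ℝ} (hg : Integrable g μ) : Integrable (fun ω => B ω * (g ω : ℂ)) μ :=
    hg.ofReal.bdd_mul (hB.mono hm).aestronglyMeasurable hBK
  have hDi : Integrable D μ := hD.integrable (by norm_num)
  have hfirst : ∫ ω, B ω * (D ω : ℂ) ∂μ = 0 := by
    rw [← integral_mul_ofReal_condExp hm hB hBK hDi]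
    refine integral_eq_zero_of_ae ?_
    filter_upwards [hD_zero] with ω hω
    simp [hω]
  have hi₁ := (hB_mul hDi).mul_const Complex.I
  have hi₂ := (hB_mul hD.integrable_sq).div_const 2
  have hi₃ := (hB_mul (integrable_condExp (m := m) (f := fun ω => D ω ^ 2))).div_const 2
  have hexpand : (fun ω => B ω * (D ω * Complex.I - D ω ^ 2 / 2 + μ[fun ω => D ω ^ 2 | m] ω / 2)) =
      fun ω => B ω * D ω * Complex.I - B ω * (D ω ^ 2 : ℝ) / 2 +
        B ω * (μ[fun ω => D ω ^ 2 | m] ω : ℂ) / 2 := by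
    ext ω
    push_cast
    ring
  rw [hexpand]
  refine ⟨(hi₁.sub hi₂).add hi₃, ?_⟩
  rw [integral_add (by exact hi₁.sub hi₂) hi₃, integral_sub hi₁ hi₂, integral_mul_const,
    integral_div, integral_div, hfirst, integral_mul_ofReal_condExp hm hB hBK hD.integrable_sq]
  ring

lemma norm_integral_mul_cexp_sub_exp_condExp_le (hm : m ≤ mΩ) (hD : MemLp D 2 μ)
    (hD_zero : μ[D | m] =ᵐ[μ] 0) {B : Ω → ℂ} (hB : StronglyMeasurable[m] B) {K : ℝ}
    (hBK : ∀ᵐ ω ∂μ, ‖B ω‖ ≤ K) (hK : 0 ≤ K) :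
    ‖∫ ω, B ω * (Complex.exp (D ω * Complex.I) -
        Real.exp (-(μ[fun ω => D ω ^ 2 | m] ω / 2))) ∂μ‖ ≤
      5 * K * ∫ ω, min (D ω ^ 2) (|D ω| ^ 3) ∂μ := by
  set s := μ[fun ω => D ω ^ 2 | m]
  obtain ⟨hlin, hlin_zero⟩ := integral_mul_taylor_eq_zero hm hD hD_zero hB hBK
  have hrem := integrable_expNegHalfRemainder_condExp_sq hm hD
  have hrem_le := integral_expNegHalfRemainder_condExp_sq_le hm hD
  have hmin := integrable_min_sq_abs_cube hD
  set rest : Ω → ℂ := fun ω =>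
    B ω * (Complex.exp (D ω * Complex.I) - (1 + D ω * Complex.I - D ω ^ 2 / 2) -
      expNegHalfRemainder (s ω)) with hrest
  have hrest_le : ∀ᵐ ω ∂μ, ‖rest ω‖ ≤
      K * (4 * min (D ω ^ 2) (|D ω| ^ 3) + expNegHalfRemainder (s ω)) := by
    filter_upwards [hBK] with ω hω
    rw [hrest, norm_mul]
    refine mul_le_mul hω ((norm_sub_le _ _).trans (add_le_add ?_ ?_)) (norm_nonneg _) hK
    · exact norm_cexp_mul_I_sub_taylor_le _
    · rw [Complex.norm_real, Real.norm_of_nonneg (expNegHalfRemainder_nonneg _)]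
  have hbound := ((hmin.const_mul 4).add hrem).const_mul K
  have hrest_int : Integrable rest μ := by
    refine hbound.mono' (AEMeasurable.aestronglyMeasurable ?_) hrest_le
    have hDm := hD.aestronglyMeasurable.aemeasurable
    have hBm := (hB.mono hm).aestronglyMeasurable (μ := μ).aemeasurable
    have := hrem.1.aemeasurable
    fun_prop
  calc ‖∫ ω, B ω * (Complex.exp (D ω * Complex.I) - Real.exp (-(s ω / 2))) ∂μ‖
      = ‖∫ ω, rest ω ∂μ‖ := by
        rw [← add_zero (∫ ω, rest ω ∂μ), ← hlin_zero, ← integral_add hrest_int hlin]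
        congr 2 with ω
        simp only [hrest, expNegHalfRemainder]
        push_cast
        ring
    _ ≤ ∫ ω, K * (4 * min (D ω ^ 2) (|D ω| ^ 3) + expNegHalfRemainder (s ω)) ∂μ :=
        norm_integral_le_of_norm_le hbound hrest_le
    _ ≤ 5 * K * ∫ ω, min (D ω ^ 2) (|D ω| ^ 3) ∂μ := by
        rw [integral_const_mul, integral_add (hmin.const_mul 4) hrem, integral_const_mul]
        nlinarith

end OneStep

lemma sum_range_stopped_le {s : ℕ → ℝ} {K : ℝ} (hs : ∀ k, 0 ≤ s k) (hK : 0 ≤ K) (n : ℕ) :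
    ∑ k ∈ Finset.range n, (if ∑ j ∈ Finset.range (k + 1), s j ≤ K then s k else 0) ≤ K := by
  induction n with
  | zero => simpa using hK
  | succ n ih =>
    rw [Finset.sum_range_succ]
    split_ifs with hn
    · calc (∑ k ∈ Finset.range n, if ∑ j ∈ Finset.range (k + 1), s j ≤ K then s k else 0) + s n
          ≤ ∑ k ∈ Finset.range n, s k + s n := by
            gcongr with k
            split_ifs
            exacts [le_rfl, hs k]
        _ ≤ K := by rwa [← Finset.sum_range_succ]
    · rwa [add_zero]

section PredictableVariation

variable {Ω : Type*} {mΩ : MeasurableSpace Ω} {μ : Measure Ω} {𝒢 : Filtration ℕ mΩ}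
  {D : ℕ → Ω → ℝ}

/-- `D` is a sequence of square integrable martingale differences with respect to `𝒢`, where `D k`
is the increment between the times `k` and `k + 1`. -/
structure IsMartingaleDiff (D : ℕ → Ω → ℝ) (𝒢 : Filtration ℕ mΩ) (μ : Measure Ω) : Prop where
  stronglyMeasurable : ∀ k, StronglyMeasurable[𝒢 (k + 1)] (D k)
  memLp : ∀ k, MemLp (D k) 2 μ
  condExp_eq_zero : ∀ k, μ[D k | 𝒢 k] =ᵐ[μ] 0

/-- The predictable quadratic variation at time `n` of the martingale with increments `D`. -/
noncomputable def predictableVariation (μ : Measure Ω) (𝒢 : Filtration ℕ mΩ) (D : ℕ → Ω → ℝ)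
    (n : ℕ) (ω : Ω) : ℝ :=
  ∑ k ∈ Finset.range n, (μ[fun ω => D k ω ^ 2 | 𝒢 k]) ω

lemma stronglyMeasurable_predictableVariation {n m : ℕ} (hnm : n ≤ m + 1) :
    StronglyMeasurable[𝒢 m] (predictableVariation μ 𝒢 D n) :=
  Finset.stronglyMeasurable_fun_sum _ fun k hk => stronglyMeasurable_condExp.mono
    (𝒢.mono (by have := Finset.mem_range.1 hk; omega))

lemma ae_condExp_sq_nonneg : ∀ᵐ ω ∂μ, ∀ k, 0 ≤ (μ[fun ω => D k ω ^ 2 | 𝒢 k]) ω :=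
  ae_all_iff.2 fun k => condExp_nonneg (.of_forall fun ω => sq_nonneg (D k ω))

lemma ae_predictableVariation_nonneg : ∀ᵐ ω ∂μ, ∀ n, 0 ≤ predictableVariation μ 𝒢 D n ω := by
  filter_upwards [ae_condExp_sq_nonneg (μ := μ) (𝒢 := 𝒢) (D := D)] with ω hω n
  exact Finset.sum_nonneg fun k _ => hω k

lemma ae_monotone_predictableVariation :
    ∀ᵐ ω ∂μ, Monotone fun n => predictableVariation μ 𝒢 D n ω := by
  filter_upwards [ae_condExp_sq_nonneg (μ := μ) (𝒢 := 𝒢) (D := D)] with ω hω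
  exact monotone_nat_of_le_succ fun n => by
    simpa only [predictableVariation, Finset.sum_range_succ] using le_add_of_nonneg_right (hω n)

lemma ae_predictableVariation_const_mul (a : ℝ) :
    ∀ᵐ ω ∂μ, ∀ n, predictableVariation μ 𝒢 (fun k ω => a * D k ω) n ω =
      a ^ 2 * predictableVariation μ 𝒢 D n ω := by
  have hscale : ∀ᵐ ω ∂μ, ∀ k, (μ[fun ω => (a * D k ω) ^ 2 | 𝒢 k]) ω =
      a ^ 2 * (μ[fun ω => D k ω ^ 2 | 𝒢 k]) ω := by
    refine ae_all_iff.2 fun k => ?_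
    simp_rw [mul_pow]
    exact condExp_smul (a ^ 2) (fun ω => D k ω ^ 2) (𝒢 k)
  filter_upwards [hscale] with ω hω n
  simp only [predictableVariation, hω, Finset.mul_sum]

namespace IsMartingaleDiff

lemma const_mul (hD : IsMartingaleDiff D 𝒢 μ) (a : ℝ) :
    IsMartingaleDiff (fun k ω => a * D k ω) 𝒢 μ where
  stronglyMeasurable k := (hD.stronglyMeasurable k).const_mul a
  memLp k := (hD.memLp k).const_mul a
  condExp_eq_zero k := by
    filter_upwards [condExp_smul a (D k) (𝒢 k), hD.condExp_eq_zero k] with ω hω hω'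
    rw [Pi.smul_apply, hω', Pi.zero_apply, smul_zero] at hω
    exact hω

lemma indicator [IsFiniteMeasure μ] (hD : IsMartingaleDiff D 𝒢 μ) {A : ℕ → Set Ω}
    (hA : ∀ k, MeasurableSet[𝒢 k] (A k)) :
    IsMartingaleDiff (fun k => (A k).indicator (D k)) 𝒢 μ where
  stronglyMeasurable k := (hD.stronglyMeasurable k).indicator (𝒢.mono k.le_succ _ (hA k))
  memLp k := (hD.memLp k).indicator (𝒢.le k _ (hA k))
  condExp_eq_zero k := by
    filter_upwards [condExp_indicator ((hD.memLp k).integrable (by norm_num)) (hA k),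
      hD.condExp_eq_zero k] with ω hω hω'
    rw [hω, Pi.zero_apply, Set.indicator_apply_eq_zero]
    exact fun _ => hω'

lemma stronglyMeasurable_sum (hD : IsMartingaleDiff D 𝒢 μ) (n : ℕ) :
    StronglyMeasurable[𝒢 n] fun ω => ∑ k ∈ Finset.range n, D k ω :=
  Finset.stronglyMeasurable_fun_sum _ fun k hk =>
    (hD.stronglyMeasurable k).mono (𝒢.mono (Finset.mem_range.1 hk))

end IsMartingaleDiff

/-- The increments of the martingale with increments `D`, stopped just before its predictable
quadratic variation exceeds `K`. -/
noncomputable def stoppedIncrement (μ : Measure Ω) (𝒢 : Filtration ℕ mΩ) (D : ℕ → Ω → ℝ)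
    (K : ℝ) (k : ℕ) : Ω → ℝ :=
  {ω | predictableVariation μ 𝒢 D (k + 1) ω ≤ K}.indicator (D k)

variable {K : ℝ}

lemma abs_stoppedIncrement_le (k : ℕ) (ω : Ω) : |stoppedIncrement μ 𝒢 D K k ω| ≤ |D k ω| :=
  norm_indicator_le_norm_self (D k) ω

lemma ae_stoppedIncrement_eq :
    ∀ᵐ ω ∂μ, ∀ n, predictableVariation μ 𝒢 D n ω ≤ K →
      ∀ k < n, stoppedIncrement μ 𝒢 D K k ω = D k ω := by
  filter_upwards [ae_monotone_predictableVariation (μ := μ) (𝒢 := 𝒢) (D := D)] with ω hmono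
  intro n hn k hk
  exact Set.indicator_of_mem (s := {ω | predictableVariation μ 𝒢 D (k + 1) ω ≤ K})
    ((hmono hk).trans hn) _

namespace IsMartingaleDiff

lemma stopped [IsFiniteMeasure μ] (hD : IsMartingaleDiff D 𝒢 μ) :
    IsMartingaleDiff (stoppedIncrement μ 𝒢 D K) 𝒢 μ :=
  hD.indicator fun _ =>
    (stronglyMeasurable_predictableVariation le_rfl).measurable measurableSet_Iic

lemma ae_condExp_sq_stopped (hD : IsMartingaleDiff D 𝒢 μ) :
    ∀ᵐ ω ∂μ, ∀ k, (μ[fun ω => stoppedIncrement μ 𝒢 D K k ω ^ 2 | 𝒢 k]) ω =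
      if predictableVariation μ 𝒢 D (k + 1) ω ≤ K then (μ[fun ω => D k ω ^ 2 | 𝒢 k]) ω else 0 := by
  refine ae_all_iff.2 fun k => ?_
  have hsq : (fun ω => stoppedIncrement μ 𝒢 D K k ω ^ 2) =
      {ω | predictableVariation μ 𝒢 D (k + 1) ω ≤ K}.indicator fun ω => D k ω ^ 2 := by
    ext ω
    simp only [stoppedIncrement, Set.indicator_apply]
    split_ifs <;> simp
  rw [hsq]
  exact condExp_indicator (hD.memLp k).integrable_sq
    ((stronglyMeasurable_predictableVariation le_rfl).measurable measurableSet_Iic)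

lemma ae_predictableVariation_stopped_le (hD : IsMartingaleDiff D 𝒢 μ) (hK : 0 ≤ K) :
    ∀ᵐ ω ∂μ, ∀ n, predictableVariation μ 𝒢 (stoppedIncrement μ 𝒢 D K) n ω ≤ K := by
  filter_upwards [hD.ae_condExp_sq_stopped (K := K),
    ae_condExp_sq_nonneg (μ := μ) (𝒢 := 𝒢) (D := D)] with ω hω hnonneg n
  simp only [predictableVariation, hω]
  exact sum_range_stopped_le hnonneg hK n

lemma ae_predictableVariation_stopped_le_self (hD : IsMartingaleDiff D 𝒢 μ) :
    ∀ᵐ ω ∂μ, ∀ n, predictableVariation μ 𝒢 (stoppedIncrement μ 𝒢 D K) n ω ≤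
      predictableVariation μ 𝒢 D n ω := by
  filter_upwards [hD.ae_condExp_sq_stopped (K := K),
    ae_condExp_sq_nonneg (μ := μ) (𝒢 := 𝒢) (D := D)] with ω hω hnonneg n
  refine Finset.sum_le_sum fun k _ => ?_
  rw [hω k]
  split_ifs
  exacts [le_rfl, hnonneg k]

lemma ae_predictableVariation_stopped_eq (hD : IsMartingaleDiff D 𝒢 μ) :
    ∀ᵐ ω ∂μ, ∀ n, predictableVariation μ 𝒢 D n ω ≤ K →
      predictableVariation μ 𝒢 (stoppedIncrement μ 𝒢 D K) n ω = predictableVariation μ 𝒢 D n ω := by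
  filter_upwards [hD.ae_condExp_sq_stopped (K := K),
    ae_monotone_predictableVariation (μ := μ) (𝒢 := 𝒢) (D := D)] with ω hω hmono
  intro n hn
  exact Finset.sum_congr rfl fun k hk =>
    (hω k).trans (if_pos ((hmono (Finset.mem_range.1 hk)).trans hn))

end IsMartingaleDiff

end PredictableVariation

section CompensatedCharFun

variable {Ω : Type*} {mΩ : MeasurableSpace Ω} {μ : Measure Ω} {𝒢 : Filtration ℕ mΩ}
  {D : ℕ → Ω → ℝ} {K : ℝ}

/-- `exp (i Sₙ + Vₙ / 2)`, where `S` is the martingale with increments `D` and `V` its predictable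
quadratic variation. It is nearly a martingale, since `E[exp (i D k) | 𝒢 k]` is close to
`exp (-E[D k ^ 2 | 𝒢 k] / 2)`. -/
noncomputable def compensatedCharFun (μ : Measure Ω) (𝒢 : Filtration ℕ mΩ) (D : ℕ → Ω → ℝ)
    (n : ℕ) (ω : Ω) : ℂ :=
  Complex.exp ((∑ k ∈ Finset.range n, D k ω : ℝ) * Complex.I +
    (predictableVariation μ 𝒢 D n ω / 2 : ℝ))

lemma norm_compensatedCharFun (n : ℕ) (ω : Ω) :
    ‖compensatedCharFun μ 𝒢 D n ω‖ = Real.exp (predictableVariation μ 𝒢 D n ω / 2) := by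
  rw [compensatedCharFun, Complex.norm_exp, Complex.add_re, Complex.re_ofReal_mul, Complex.I_re,
    mul_zero, zero_add, Complex.ofReal_re]

lemma norm_compensatedCharFun_le {n : ℕ} {ω : Ω} (h : predictableVariation μ 𝒢 D n ω ≤ K) :
    ‖compensatedCharFun μ 𝒢 D n ω‖ ≤ Real.exp (K / 2) := by
  rw [norm_compensatedCharFun]
  gcongr

lemma compensatedCharFun_succ (n : ℕ) (ω : Ω) :
    compensatedCharFun μ 𝒢 D (n + 1) ω = compensatedCharFun μ 𝒢 D n ω *
      Real.exp ((μ[fun ω => D n ω ^ 2 | 𝒢 n]) ω / 2) * Complex.exp (D n ω * Complex.I) := by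
  simp only [compensatedCharFun, predictableVariation, Finset.sum_range_succ, Complex.ofReal_exp,
    ← Complex.exp_add]
  congr 1
  push_cast
  ring

namespace IsMartingaleDiff

lemma stronglyMeasurable_compensatedCharFun (hD : IsMartingaleDiff D 𝒢 μ) (n : ℕ) :
    StronglyMeasurable[𝒢 n] (compensatedCharFun μ 𝒢 D n) := by
  have hsum := (hD.stronglyMeasurable_sum n).measurable
  have hvar := (stronglyMeasurable_predictableVariation (μ := μ) (𝒢 := 𝒢) (D := D)
    n.le_succ).measurable
  apply Measurable.stronglyMeasurable
  unfold compensatedCharFun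
  fun_prop

variable {ξ : Ω → ℝ} {m : ℕ}

lemma integrable_compensatedCharFun_mul (hD : IsMartingaleDiff D 𝒢 μ) {n : ℕ}
    (hV : ∀ᵐ ω ∂μ, predictableVariation μ 𝒢 D n ω ≤ K) (hξ : Integrable ξ μ) :
    Integrable (fun ω => compensatedCharFun μ 𝒢 D n ω * ξ ω) μ :=
  hξ.ofReal.bdd_mul
    ((hD.stronglyMeasurable_compensatedCharFun n).mono (𝒢.le n)).aestronglyMeasurable
    (hV.mono fun _ => norm_compensatedCharFun_le)

variable [IsFiniteMeasure μ]

lemma norm_integral_compensatedCharFun_succ_sub_le (hD : IsMartingaleDiff D 𝒢 μ)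
    (hV : ∀ᵐ ω ∂μ, ∀ n, predictableVariation μ 𝒢 D n ω ≤ K) (hξ : StronglyMeasurable[𝒢 m] ξ)
    (hξ_le : ∀ᵐ ω ∂μ, |ξ ω| ≤ 1) {n : ℕ} (hmn : m ≤ n) :
    ‖∫ ω, compensatedCharFun μ 𝒢 D (n + 1) ω * ξ ω ∂μ -
        ∫ ω, compensatedCharFun μ 𝒢 D n ω * ξ ω ∂μ‖ ≤
      5 * Real.exp (K / 2) * ∫ ω, min (D n ω ^ 2) (|D n ω| ^ 3) ∂μ := by
  set s := μ[fun ω => D n ω ^ 2 | 𝒢 n]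
  set B : Ω → ℂ := fun ω => compensatedCharFun μ 𝒢 D n ω * Real.exp (s ω / 2) * ξ ω with hB
  have hξ_int : Integrable ξ μ :=
    Integrable.of_bound (hξ.mono (𝒢.le m)).aestronglyMeasurable 1 hξ_le
  have hB_meas : StronglyMeasurable[𝒢 n] B := by
    have hZ := (hD.stronglyMeasurable_compensatedCharFun n).measurable
    have hs := (stronglyMeasurable_condExp (m := 𝒢 n) (μ := μ)
      (f := fun ω => D n ω ^ 2)).measurable
    have hξ' := (hξ.mono (𝒢.mono hmn)).measurable
    exact Measurable.stronglyMeasurable (by fun_prop)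
  have hB_le : ∀ᵐ ω ∂μ, ‖B ω‖ ≤ Real.exp (K / 2) := by
    filter_upwards [hV, hξ_le] with ω hV hξ
    calc ‖B ω‖ = ‖compensatedCharFun μ 𝒢 D (n + 1) ω‖ * |ξ ω| := by
          rw [compensatedCharFun_succ]
          simp only [hB, norm_mul, Complex.norm_real, Complex.norm_exp_ofReal_mul_I,
            Real.norm_eq_abs, mul_one, s]
      _ ≤ Real.exp (K / 2) :=
          (mul_le_of_le_one_right (norm_nonneg _) hξ).trans (norm_compensatedCharFun_le (hV _))
  rw [← integral_sub
    (hD.integrable_compensatedCharFun_mul (hV.mono fun _ h => h _) hξ_int)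
    (hD.integrable_compensatedCharFun_mul (hV.mono fun _ h => h _) hξ_int)]
  convert norm_integral_mul_cexp_sub_exp_condExp_le (𝒢.le n) (hD.memLp n) (hD.condExp_eq_zero n)
    hB_meas hB_le (Real.exp_nonneg _) using 4 with ω
  have hcancel : (Real.exp (s ω / 2) : ℂ) * Real.exp (-(s ω / 2)) = 1 := by
    rw [← Complex.ofReal_mul, ← Real.exp_add, add_neg_cancel, Real.exp_zero, Complex.ofReal_one]
  rw [compensatedCharFun_succ]
  linear_combination compensatedCharFun μ 𝒢 D n ω * ξ ω * hcancel

lemma norm_integral_compensatedCharFun_sub_le (hD : IsMartingaleDiff D 𝒢 μ)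
    (hV : ∀ᵐ ω ∂μ, ∀ n, predictableVariation μ 𝒢 D n ω ≤ K) (hξ : StronglyMeasurable[𝒢 m] ξ)
    (hξ_le : ∀ᵐ ω ∂μ, |ξ ω| ≤ 1) {n : ℕ} (hmn : m ≤ n) :
    ‖∫ ω, compensatedCharFun μ 𝒢 D n ω * ξ ω ∂μ -
        ∫ ω, compensatedCharFun μ 𝒢 D m ω * ξ ω ∂μ‖ ≤
      5 * Real.exp (K / 2) *
        ∑ k ∈ Finset.range n, ∫ ω, min (D k ω ^ 2) (|D k ω| ^ 3) ∂μ := by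
  induction n, hmn using Nat.le_induction with
  | base =>
    rw [sub_self, norm_zero]
    positivity
  | succ n hmn ih =>
    rw [Finset.sum_range_succ, mul_add, add_comm (_ * _)]
    refine (norm_sub_le_norm_sub_add_norm_sub _ _ _).trans (add_le_add ?_ ih)
    exact hD.norm_integral_compensatedCharFun_succ_sub_le hV hξ hξ_le hmn

end IsMartingaleDiff

end CompensatedCharFun

section Density

variable {Ω : Type*} {mΩ : MeasurableSpace Ω} {μ : Measure Ω} {𝒢 : Filtration ℕ mΩ}

lemma norm_integral_mul_condExp_sub_le {Z : Ω → ℂ} {M : ℝ} (hZ : AEStronglyMeasurable Z μ)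
    (hZ_le : ∀ᵐ ω ∂μ, ‖Z ω‖ ≤ M) (f : Ω → ℝ) (m n : ℕ) :
    ‖∫ ω, Z ω * (μ[f | 𝒢 n]) ω ∂μ - ∫ ω, Z ω * (μ[f | 𝒢 m]) ω ∂μ‖ ≤
      M * (∫ ω, |(μ[f | 𝒢 n]) ω - (μ[f | ⨆ m, 𝒢 m]) ω| ∂μ +
        ∫ ω, |(μ[f | 𝒢 m]) ω - (μ[f | ⨆ m, 𝒢 m]) ω| ∂μ) := by
  set f' := μ[f | ⨆ m, 𝒢 m]
  have hint (k : ℕ) : Integrable (fun ω => Z ω * (μ[f | 𝒢 k]) ω) μ :=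
    integrable_condExp.ofReal.bdd_mul hZ hZ_le
  have hdist (k : ℕ) : Integrable (fun ω => |(μ[f | 𝒢 k]) ω - f' ω|) μ :=
    (integrable_condExp.sub integrable_condExp).abs
  rw [← integral_sub (hint n) (hint m), ← integral_add (hdist n) (hdist m), ← integral_const_mul]
  refine norm_integral_le_of_norm_le (((hdist n).add (hdist m)).const_mul M) ?_
  filter_upwards [hZ_le] with ω hω
  calc ‖Z ω * (μ[f | 𝒢 n]) ω - Z ω * (μ[f | 𝒢 m]) ω‖
      = ‖Z ω‖ * |(μ[f | 𝒢 n]) ω - (μ[f | 𝒢 m]) ω| := by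
        rw [← mul_sub, norm_mul, ← Complex.ofReal_sub, Complex.norm_real, Real.norm_eq_abs]
    _ ≤ M * (|(μ[f | 𝒢 n]) ω - f' ω| + |(μ[f | 𝒢 m]) ω - f' ω|) := by
        rw [abs_sub_comm ((μ[f | 𝒢 m]) ω) (f' ω)]
        gcongr
        exacts [(norm_nonneg _).trans hω, abs_sub_le _ _ _]

variable [IsFiniteMeasure μ]

lemma tendsto_integral_abs_condExp_sub_condExp_iSup (f : Ω → ℝ) :
    Tendsto (fun n => ∫ ω, |(μ[f | 𝒢 n]) ω - (μ[f | ⨆ m, 𝒢 m]) ω| ∂μ) atTop (nhds 0) := by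
  have hconv := (ENNReal.tendsto_toReal ENNReal.zero_ne_top).comp
    (tendsto_eLpNorm_condExp (μ := μ) (ℱ := 𝒢) f)
  refine hconv.congr fun n => ?_
  have hint : Integrable (μ[f | 𝒢 n] - μ[f | ⨆ m, 𝒢 m]) μ :=
    integrable_condExp.sub integrable_condExp
  rw [Function.comp_apply, toReal_eLpNorm hint.1, lpNorm_one_eq_integral_norm hint.1]
  rfl

/-- Rényi's mixing criterion: since `Z n` is `𝒢 n`-measurable, it suffices to test against the
dense subspace `⋃ m, L¹(𝒢 m)` of `L¹(⨆ m, 𝒢 m)`. -/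
lemma tendsto_integral_mul_of_forall_stronglyMeasurable {Z : ℕ → Ω → ℂ} {M : ℝ}
    (hZ : ∀ n, StronglyMeasurable[𝒢 n] (Z n)) (hZ_le : ∀ n, ∀ᵐ ω ∂μ, ‖Z n ω‖ ≤ M)
    (hconv : ∀ (m : ℕ) (ξ : Ω → ℝ), StronglyMeasurable[𝒢 m] ξ → (∀ᵐ ω ∂μ, |ξ ω| ≤ 1) →
      Tendsto (fun n => ∫ ω, Z n ω * ξ ω ∂μ) atTop (nhds (∫ ω, (ξ ω : ℂ) ∂μ)))
    {ξ : Ω → ℝ} (hξ : Integrable ξ μ) (hξ_le : ∀ᵐ ω ∂μ, |ξ ω| ≤ 1) :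
    Tendsto (fun n => ∫ ω, Z n ω * ξ ω ∂μ) atTop (nhds (∫ ω, (ξ ω : ℂ) ∂μ)) := by
  set c : ℕ → ℝ := fun n => ∫ ω, |(μ[ξ | 𝒢 n]) ω - (μ[ξ | ⨆ m, 𝒢 m]) ω| ∂μ
  have hc : Tendsto c atTop (nhds 0) := tendsto_integral_abs_condExp_sub_condExp_iSup ξ
  have hmean (m : ℕ) : ∫ ω, ((μ[ξ | 𝒢 m]) ω : ℂ) ∂μ = ∫ ω, (ξ ω : ℂ) ∂μ := by
    rw [integral_complex_ofReal, integral_complex_ofReal, integral_condExp (𝒢.le m)]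
  have hbound (m n : ℕ) : dist (∫ ω, Z n ω * ξ ω ∂μ) (∫ ω, (ξ ω : ℂ) ∂μ) ≤
      M * (c n + c m) + dist (∫ ω, Z n ω * (μ[ξ | 𝒢 m]) ω ∂μ) (∫ ω, (ξ ω : ℂ) ∂μ) := by
    rw [← integral_mul_ofReal_condExp (𝒢.le n) (hZ n) (hZ_le n) hξ]
    refine (dist_triangle _ _ _).trans (add_le_add_left ?_ _)
    rw [dist_eq_norm]
    exact norm_integral_mul_condExp_sub_le ((hZ n).mono (𝒢.le n)).aestronglyMeasurable (hZ_le n)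
      ξ m n
  have hlim (m : ℕ) : Tendsto (fun n => M * (c n + c m) +
      dist (∫ ω, Z n ω * (μ[ξ | 𝒢 m]) ω ∂μ) (∫ ω, (ξ ω : ℂ) ∂μ)) atTop (nhds (M * c m)) := by
    have htest := hconv m _ stronglyMeasurable_condExp (ae_bdd_abs_condExp_of_ae_bdd_abs hξ_le)
    rw [hmean, tendsto_iff_dist_tendsto_zero] at htest
    simpa using ((hc.add_const (c m)).const_mul M).add htest
  rw [Metric.tendsto_nhds]
  intro ε hε
  have hMc : Tendsto (fun m => M * c m) atTop (nhds 0) := by simpa using hc.const_mul M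
  obtain ⟨m, hm⟩ := (hMc.eventually_lt_const hε).exists
  filter_upwards [(hlim m).eventually_lt_const hm] with n hn
  exact (hbound m n).trans_lt hn

end Density

section LindebergArray

variable {Ω : Type*} {mΩ : MeasurableSpace Ω} {μ : Measure Ω} {𝒢 : Filtration ℕ mΩ}
  {E : ℕ → ℕ → Ω → ℝ} {K : ℝ}

/-- A triangular array of martingale differences for a single filtration, with asymptotically
negligible increments in the sense of Lindeberg. The sum in `tendsto_sum_integral` bounds the error
of the normal approximation, and tends to zero under the usual Lindeberg condition if the total
variance is bounded. -/
structure IsLindebergArray (E : ℕ → ℕ → Ω → ℝ) (𝒢 : Filtration ℕ mΩ) (μ : Measure Ω) : Prop where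
  isMartingaleDiff : ∀ n, IsMartingaleDiff (E n) 𝒢 μ
  tendsto_increment : ∀ k, ∀ᵐ ω ∂μ, Tendsto (fun n => E n k ω) atTop (nhds 0)
  tendsto_predictableVariation : ∀ k, ∀ᵐ ω ∂μ,
    Tendsto (fun n => predictableVariation μ 𝒢 (E n) k ω) atTop (nhds 0)
  tendsto_sum_integral : Tendsto
    (fun n => ∑ k ∈ Finset.range n, ∫ ω, min (E n k ω ^ 2) (|E n k ω| ^ 3) ∂μ) atTop (nhds 0)

namespace IsLindebergArray

lemma tendsto_compensatedCharFun (hE : IsLindebergArray E 𝒢 μ) (m : ℕ) :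
    ∀ᵐ ω ∂μ, Tendsto (fun n => compensatedCharFun μ 𝒢 (E n) m ω) atTop (nhds 1) := by
  filter_upwards [ae_all_iff.2 hE.tendsto_increment, hE.tendsto_predictableVariation m]
    with ω hincr hvar
  have hsum : Tendsto (fun n => ∑ k ∈ Finset.range m, E n k ω) atTop (nhds 0) := by
    simpa using tendsto_finsetSum (Finset.range m) fun k _ => hincr k
  have hcont : Continuous fun p : ℝ × ℝ =>
      Complex.exp ((p.1 : ℂ) * Complex.I + (p.2 / 2 : ℝ)) := by fun_prop
  simpa [compensatedCharFun, Function.comp_def] using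
    (hcont.tendsto (0, 0)).comp (hsum.prodMk_nhds hvar)

lemma stopped [IsFiniteMeasure μ] (hE : IsLindebergArray E 𝒢 μ) :
    IsLindebergArray (fun n => stoppedIncrement μ 𝒢 (E n) K) 𝒢 μ where
  isMartingaleDiff n := (hE.isMartingaleDiff n).stopped
  tendsto_increment k := by
    filter_upwards [hE.tendsto_increment k] with ω hω
    exact squeeze_zero_norm (fun n => abs_stoppedIncrement_le k ω)
      ((tendsto_zero_iff_abs_tendsto_zero _).1 hω)
  tendsto_predictableVariation k := by
    filter_upwards [hE.tendsto_predictableVariation k, ae_all_iff.2 fun n =>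
        (hE.isMartingaleDiff n).ae_predictableVariation_stopped_le_self (K := K),
      ae_all_iff.2 fun n => ae_predictableVariation_nonneg (μ := μ) (𝒢 := 𝒢)
        (D := stoppedIncrement μ 𝒢 (E n) K)] with ω hω hle hnonneg
    exact squeeze_zero (fun n => hnonneg n k) (fun n => hle n k) hω
  tendsto_sum_integral := by
    refine squeeze_zero (fun n => ?_) (fun n => ?_) hE.tendsto_sum_integral
    · positivity
    · refine Finset.sum_le_sum fun k _ => integral_mono
        (integrable_min_sq_abs_cube ((hE.isMartingaleDiff n).stopped.memLp k))
        (integrable_min_sq_abs_cube ((hE.isMartingaleDiff n).memLp k)) fun ω => ?_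
      have habs := abs_stoppedIncrement_le (μ := μ) (𝒢 := 𝒢) (D := E n) (K := K) k ω
      exact min_le_min (sq_le_sq.2 habs) (by gcongr)

section Bounded

variable [IsFiniteMeasure μ] {ξ : Ω → ℝ}

lemma tendsto_integral_compensatedCharFun_mul_of_stronglyMeasurable
    (hE : IsLindebergArray E 𝒢 μ)
    (hV : ∀ n, ∀ᵐ ω ∂μ, ∀ k, predictableVariation μ 𝒢 (E n) k ω ≤ K) {m : ℕ}
    (hξ : StronglyMeasurable[𝒢 m] ξ) (hξ_le : ∀ᵐ ω ∂μ, |ξ ω| ≤ 1) :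
    Tendsto (fun n => ∫ ω, compensatedCharFun μ 𝒢 (E n) n ω * ξ ω ∂μ) atTop
      (nhds (∫ ω, (ξ ω : ℂ) ∂μ)) := by
  have hξ_int : Integrable ξ μ :=
    Integrable.of_bound (hξ.mono (𝒢.le m)).aestronglyMeasurable 1 hξ_le
  have hstart : Tendsto (fun n => ∫ ω, compensatedCharFun μ 𝒢 (E n) m ω * ξ ω ∂μ) atTop
      (nhds (∫ ω, (ξ ω : ℂ) ∂μ)) := by
    refine tendsto_integral_of_dominated_convergence (fun _ => Real.exp (K / 2))
      (fun n => ((hE.isMartingaleDiff n).integrable_compensatedCharFun_mul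
        ((hV n).mono fun _ h => h m) hξ_int).aestronglyMeasurable) (integrable_const _)
      (fun n => ?_) ?_
    · filter_upwards [hV n, hξ_le] with ω hV hξ
      rw [norm_mul, Complex.norm_real, Real.norm_eq_abs]
      exact (mul_le_of_le_one_right (norm_nonneg _) hξ).trans (norm_compensatedCharFun_le (hV m))
    · filter_upwards [hE.tendsto_compensatedCharFun m] with ω hω
      simpa using hω.mul_const (ξ ω : ℂ)
  have herror : Tendsto (fun n => ∫ ω, compensatedCharFun μ 𝒢 (E n) n ω * ξ ω ∂μ -
      ∫ ω, compensatedCharFun μ 𝒢 (E n) m ω * ξ ω ∂μ) atTop (nhds 0) := by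
    refine squeeze_zero_norm' ?_
      (by simpa using hE.tendsto_sum_integral.const_mul (5 * Real.exp (K / 2)))
    filter_upwards [eventually_ge_atTop m] with n hmn
    exact (hE.isMartingaleDiff n).norm_integral_compensatedCharFun_sub_le (hV n) hξ hξ_le hmn
  simpa using herror.add hstart

lemma tendsto_integral_compensatedCharFun_mul (hE : IsLindebergArray E 𝒢 μ)
    (hV : ∀ n, ∀ᵐ ω ∂μ, ∀ k, predictableVariation μ 𝒢 (E n) k ω ≤ K)
    (hξ : Integrable ξ μ) (hξ_le : ∀ᵐ ω ∂μ, |ξ ω| ≤ 1) :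
    Tendsto (fun n => ∫ ω, compensatedCharFun μ 𝒢 (E n) n ω * ξ ω ∂μ) atTop
      (nhds (∫ ω, (ξ ω : ℂ) ∂μ)) :=
  tendsto_integral_mul_of_forall_stronglyMeasurable
    (fun n => (hE.isMartingaleDiff n).stronglyMeasurable_compensatedCharFun n)
    (fun n => (hV n).mono fun _ h => norm_compensatedCharFun_le (h n))
    (fun _ _ hξ hξ_le =>
      hE.tendsto_integral_compensatedCharFun_mul_of_stronglyMeasurable hV hξ hξ_le) hξ hξ_le

end Bounded

end IsLindebergArray

end LindebergArray

section Exhaustion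

variable {Ω : Type*} {mΩ : MeasurableSpace Ω} {μ : Measure Ω} [IsFiniteMeasure μ] {L : Ω → ℝ}

lemma tendsto_measureReal_compl_setOf_lt_natCast (hL : AEMeasurable L μ) :
    Tendsto (fun N : ℕ => μ.real {ω | L ω < N}ᶜ) atTop (nhds 0) := by
  have hanti : Antitone fun N : ℕ => {ω | L ω < N}ᶜ := fun M N hMN =>
    Set.compl_subset_compl.2 fun ω (hω : L ω < M) => hω.trans_le (Nat.cast_le.2 hMN)
  have hempty : ⋂ N : ℕ, {ω | L ω < N}ᶜ = ∅ := by
    refine Set.eq_empty_of_forall_notMem fun ω hω => ?_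
    obtain ⟨N, hN⟩ := exists_nat_gt (L ω)
    exact Set.mem_iInter.1 hω N hN
  have hlim := tendsto_measure_iInter_atTop (μ := μ)
    (fun N : ℕ => (nullMeasurableSet_lt hL aemeasurable_const).compl) hanti
    ⟨0, measure_ne_top _ _⟩
  rw [hempty, measure_empty] at hlim
  exact (ENNReal.tendsto_toReal ENNReal.zero_ne_top).comp hlim

lemma tendsto_integral_of_forall_tendsto_setIntegral_lt {F : ℕ → Ω → ℂ} {G : Ω → ℂ}
    (hL : AEMeasurable L μ) (hF : ∀ n, AEStronglyMeasurable (F n) μ)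
    (hF_le : ∀ n, ∀ᵐ ω ∂μ, ‖F n ω‖ ≤ 1) (hG : Integrable G μ)
    (h : ∀ N : ℕ, Tendsto (fun n => ∫ ω in {ω | L ω < N}, F n ω ∂μ) atTop
      (nhds (∫ ω in {ω | L ω < N}, G ω ∂μ))) :
    Tendsto (fun n => ∫ ω, F n ω ∂μ) atTop (nhds (∫ ω, G ω ∂μ)) := by
  have hmeas (N : ℕ) : NullMeasurableSet {ω | L ω < N} μ :=
    nullMeasurableSet_lt hL aemeasurable_const
  have hcompl (N n : ℕ) : dist (∫ ω, F n ω ∂μ) (∫ ω in {ω | L ω < N}, F n ω ∂μ) ≤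
      μ.real {ω | L ω < N}ᶜ := by
    rw [dist_eq_norm, ← integral_add_compl₀ (hmeas N) (.of_bound (hF n) 1 (hF_le n)),
      add_sub_cancel_left, ← one_mul (μ.real _)]
    exact norm_setIntegral_le_of_norm_le_const_ae' (measure_lt_top _ _)
      ((hF_le n).mono fun _ h _ => h)
  have huniform : TendstoUniformly (fun (N : ℕ) n => ∫ ω in {ω | L ω < N}, F n ω ∂μ)
      (fun n => ∫ ω, F n ω ∂μ) atTop := by
    rw [Metric.tendstoUniformly_iff]
    intro ε hε
    filter_upwards [(tendsto_measureReal_compl_setOf_lt_natCast hL).eventually_lt_const hε]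
      with N hN n using (hcompl N n).trans_lt hN
  refine huniform.tendsto_of_eventually_tendsto (.of_forall h) ?_
  have hmono : Monotone fun N : ℕ => {ω | L ω < N} :=
    fun M N hMN ω (hω : L ω < M) => hω.trans_le (Nat.cast_le.2 hMN)
  have hlim := tendsto_setIntegral_of_monotone₀ hmeas hmono hG.integrableOn
  have hunion : ⋃ N : ℕ, {ω | L ω < N} = Set.univ :=
    Set.iUnion_eq_univ_iff.2 fun ω => exists_nat_gt (L ω)
  rwa [hunion, setIntegral_univ] at hlim

end Exhaustion

section LimitLaw

variable {Ω : Type*} {mΩ : MeasurableSpace Ω} {μ : Measure Ω} {𝒢 : Filtration ℕ mΩ}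
  {E : ℕ → ℕ → Ω → ℝ} {K : ℝ} {L : Ω → ℝ}

lemma ae_nonneg_of_tendstoInMeasure {f : ℕ → Ω → ℝ} (hf : ∀ n, ∀ᵐ ω ∂μ, 0 ≤ f n ω)
    (hL : TendstoInMeasure μ f atTop L) : ∀ᵐ ω ∂μ, 0 ≤ L ω := by
  obtain ⟨ns, -, hns⟩ := hL.exists_seq_tendsto_ae
  filter_upwards [hns, ae_all_iff.2 hf] with ω hω hnonneg
  exact ge_of_tendsto' hω fun i => hnonneg (ns i)

lemma integral_mul_ofReal_indicator {A : Set Ω} (hA : NullMeasurableSet A μ) (Z : Ω → ℂ)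
    (f : Ω → ℝ) :
    ∫ ω, Z ω * (A.indicator f ω : ℝ) ∂μ = ∫ ω in A, Z ω * f ω ∂μ := by
  rw [← integral_indicator₀ hA]
  congr 1 with ω
  by_cases hω : ω ∈ A <;> simp [hω]

lemma norm_exp_neg_half_le_one {v : ℝ} (hv : 0 ≤ v) : ‖Real.exp (-(v / 2))‖ ≤ 1 := by
  rw [Real.norm_eq_abs, Real.abs_exp, Real.exp_le_one_iff]
  linarith

lemma integrable_exp_neg_half [IsFiniteMeasure μ] (hL : AEMeasurable L μ)
    (hL_nonneg : ∀ᵐ ω ∂μ, 0 ≤ L ω) :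
    Integrable (fun ω => Real.exp (-(L ω / 2))) μ :=
  .of_bound (AEMeasurable.aestronglyMeasurable (by fun_prop)) 1
    (hL_nonneg.mono fun _ => norm_exp_neg_half_le_one)

lemma IsMartingaleDiff.aestronglyMeasurable_cexp_sum {D : ℕ → Ω → ℝ}
    (hD : IsMartingaleDiff D 𝒢 μ) {n : ℕ} :
    AEStronglyMeasurable
      (fun ω => Complex.exp ((∑ k ∈ Finset.range n, D k ω : ℝ) * Complex.I)) μ := by
  have hsum := ((hD.stronglyMeasurable_sum n).mono (𝒢.le n)).measurable
  exact Measurable.aestronglyMeasurable (by fun_prop)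

lemma IsMartingaleDiff.ae_compensatedCharFun_stopped_eq {D : ℕ → Ω → ℝ}
    (hD : IsMartingaleDiff D 𝒢 μ) :
    ∀ᵐ ω ∂μ, ∀ n, predictableVariation μ 𝒢 D n ω ≤ K →
      compensatedCharFun μ 𝒢 (stoppedIncrement μ 𝒢 D K) n ω = compensatedCharFun μ 𝒢 D n ω := by
  filter_upwards [hD.ae_predictableVariation_stopped_eq (K := K),
    ae_stoppedIncrement_eq (μ := μ) (𝒢 := 𝒢) (D := D) (K := K)] with ω hvar hincr n hn
  simp only [compensatedCharFun, hvar n hn,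
    Finset.sum_congr rfl fun k hk => hincr n hn k (Finset.mem_range.1 hk)]

namespace IsLindebergArray

lemma ae_tendsto_cexp_sub_compensatedCharFun_stopped (hE : IsLindebergArray E 𝒢 μ) {φ : ℕ → ℕ}
    (hV : ∀ᵐ ω ∂μ, Tendsto (fun n => predictableVariation μ 𝒢 (E (φ n)) (φ n) ω) atTop
      (nhds (L ω))) :
    ∀ᵐ ω ∂μ, L ω < K → Tendsto (fun n =>
      Complex.exp ((∑ k ∈ Finset.range (φ n), E (φ n) k ω : ℝ) * Complex.I) -
        compensatedCharFun μ 𝒢 (stoppedIncrement μ 𝒢 (E (φ n)) K) (φ n) ω *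
          Real.exp (-(L ω / 2))) atTop (nhds 0) := by
  filter_upwards [hV, ae_all_iff.2 fun n =>
    (hE.isMartingaleDiff (φ n)).ae_compensatedCharFun_stopped_eq (K := K)] with ω hV hZ hLK
  have hfactor : Tendsto (fun n => 1 - (Real.exp
      (predictableVariation μ 𝒢 (E (φ n)) (φ n) ω / 2 - L ω / 2) : ℂ)) atTop (nhds 0) := by
    have hcont : Continuous fun v : ℝ => 1 - (Real.exp (v / 2 - L ω / 2) : ℂ) := by fun_prop
    simpa [Function.comp_def] using (hcont.tendsto (L ω)).comp hV
  refine squeeze_zero_norm' ?_ (norm_zero (E := ℂ) ▸ hfactor.norm)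
  filter_upwards [hV.eventually_lt_const hLK] with n hn
  rw [hZ n (φ n) hn.le, compensatedCharFun, Complex.exp_add, mul_assoc, ← mul_one_sub, norm_mul,
    Complex.norm_exp_ofReal_mul_I, one_mul, ← Complex.ofReal_exp, ← Complex.ofReal_mul,
    ← Real.exp_add, sub_eq_add_neg (_ / 2)]

variable [IsFiniteMeasure μ] {A : Set Ω}

lemma tendsto_setIntegral_cexp_sub_compensatedCharFun_stopped (hE : IsLindebergArray E 𝒢 μ)
    (hK : 0 ≤ K) (hL : AEMeasurable L μ) (hA : NullMeasurableSet A μ)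
    (hL_nonneg : ∀ᵐ ω ∂μ, 0 ≤ L ω) (hLK : ∀ ω ∈ A, L ω < K) {φ : ℕ → ℕ}
    (hV : ∀ᵐ ω ∂μ, Tendsto (fun n => predictableVariation μ 𝒢 (E (φ n)) (φ n) ω) atTop
      (nhds (L ω))) :
    Tendsto (fun n => ∫ ω in A,
      (Complex.exp ((∑ k ∈ Finset.range (φ n), E (φ n) k ω : ℝ) * Complex.I) -
        compensatedCharFun μ 𝒢 (stoppedIncrement μ 𝒢 (E (φ n)) K) (φ n) ω *
          Real.exp (-(L ω / 2))) ∂μ) atTop (nhds 0) := by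
  have hlim := tendsto_integral_of_dominated_convergence (μ := μ.restrict A)
    (F := fun n ω => Complex.exp ((∑ k ∈ Finset.range (φ n), E (φ n) k ω : ℝ) * Complex.I) -
      compensatedCharFun μ 𝒢 (stoppedIncrement μ 𝒢 (E (φ n)) K) (φ n) ω * Real.exp (-(L ω / 2)))
    (f := 0) (fun _ => 1 + Real.exp (K / 2)) (fun n => ?_) (integrable_const _) (fun n => ?_) ?_
  · simpa using hlim
  · have hZ := (((hE.stopped (K := K)).isMartingaleDiff (φ n)).stronglyMeasurable_compensatedCharFun
      (φ n)).mono (𝒢.le _)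
    have hexp : AEMeasurable (fun ω => (Real.exp (-(L ω / 2)) : ℂ)) μ := by fun_prop
    exact ((hE.isMartingaleDiff (φ n)).aestronglyMeasurable_cexp_sum.sub
      (hZ.aestronglyMeasurable.mul hexp.aestronglyMeasurable)).restrict
  · filter_upwards [ae_restrict_of_ae hL_nonneg,
      ae_restrict_of_ae ((hE.isMartingaleDiff (φ n)).ae_predictableVariation_stopped_le hK)]
      with ω hL hV
    refine (norm_sub_le _ _).trans (add_le_add (Complex.norm_exp_ofReal_mul_I _).le ?_)
    rw [norm_mul, Complex.norm_real, Real.norm_eq_abs, Real.abs_exp]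
    exact (mul_le_of_le_one_right (norm_nonneg _) (Real.exp_le_one_iff.2 (by linarith))).trans
      (norm_compensatedCharFun_le (hV _))
  · filter_upwards [ae_restrict_mem₀ hA,
      ae_restrict_of_ae (hE.ae_tendsto_cexp_sub_compensatedCharFun_stopped hV)] with ω hω h
    exact h (hLK ω hω)

lemma tendsto_setIntegral_cexp_of_lt (hE : IsLindebergArray E 𝒢 μ) (hK : 0 ≤ K)
    (hV : TendstoInMeasure μ (fun n => predictableVariation μ 𝒢 (E n) n) atTop L)
    (hA : NullMeasurableSet A μ) (hLK : ∀ ω ∈ A, L ω < K) :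
    Tendsto (fun n => ∫ ω in A,
      Complex.exp ((∑ k ∈ Finset.range n, E n k ω : ℝ) * Complex.I) ∂μ) atTop
      (nhds (∫ ω in A, (Real.exp (-(L ω / 2)) : ℂ) ∂μ)) := by
  have hL_nonneg := ae_nonneg_of_tendstoInMeasure
    (fun n => ae_predictableVariation_nonneg.mono fun _ h => h n) hV
  have hL : AEMeasurable L μ := hV.aemeasurable fun n =>
    ((stronglyMeasurable_predictableVariation n.le_succ).mono (𝒢.le n)).aemeasurable
  have hweight := (integrable_exp_neg_half hL hL_nonneg).indicator₀ hA
  have hweight_le : ∀ᵐ ω ∂μ, |A.indicator (fun ω => Real.exp (-(L ω / 2))) ω| ≤ 1 := by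
    filter_upwards [hL_nonneg] with ω hω
    exact (norm_indicator_le_norm_self (fun ω => Real.exp (-(L ω / 2))) ω).trans
      (norm_exp_neg_half_le_one hω)
  have hstopped := hE.stopped.tendsto_integral_compensatedCharFun_mul
    (fun n => (hE.isMartingaleDiff n).ae_predictableVariation_stopped_le hK) hweight hweight_le
  have hlimit := integral_mul_ofReal_indicator hA 1 fun ω => Real.exp (-(L ω / 2))
  simp only [Pi.one_apply, one_mul] at hlimit
  simp_rw [hlimit, integral_mul_ofReal_indicator hA] at hstopped
  refine tendsto_of_subseq_tendsto fun ns hns => ?_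
  obtain ⟨ms, hms, hV⟩ := (hV.comp hns).exists_seq_tendsto_ae
  refine ⟨ms, ?_⟩
  have herror := hE.tendsto_setIntegral_cexp_sub_compensatedCharFun_stopped hK hL hA hL_nonneg hLK
    (φ := ns ∘ ms) hV
  have hsum := herror.add (hstopped.comp (hns.comp hms.tendsto_atTop))
  rw [zero_add] at hsum
  refine hsum.congr fun n => ?_
  have hD := hE.isMartingaleDiff (ns (ms n))
  have hcexp : IntegrableOn (fun ω => Complex.exp
      ((∑ k ∈ Finset.range (ns (ms n)), E (ns (ms n)) k ω : ℝ) * Complex.I)) A μ :=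
    (Integrable.of_bound hD.aestronglyMeasurable_cexp_sum 1
      (.of_forall fun ω => (Complex.norm_exp_ofReal_mul_I _).le)).integrableOn
  have hcomp := (hD.stopped.integrable_compensatedCharFun_mul (n := ns (ms n))
    ((hD.ae_predictableVariation_stopped_le hK).mono fun _ h => h _)
    (integrable_exp_neg_half hL hL_nonneg)).integrableOn (s := A)
  exact add_eq_of_eq_sub (integral_sub hcexp hcomp)

lemma tendsto_setIntegral_cexp (hE : IsLindebergArray E 𝒢 μ)
    (hV : TendstoInMeasure μ (fun n => predictableVariation μ 𝒢 (E n) n) atTop L)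
    {H : Set Ω} (hH : MeasurableSet H) :
    Tendsto (fun n => ∫ ω in H,
      Complex.exp ((∑ k ∈ Finset.range n, E n k ω : ℝ) * Complex.I) ∂μ) atTop
      (nhds (∫ ω in H, (Real.exp (-(L ω / 2)) : ℂ) ∂μ)) := by
  have hL_nonneg := ae_nonneg_of_tendstoInMeasure
    (fun n => ae_predictableVariation_nonneg.mono fun _ h => h n) hV
  have hL : AEMeasurable L μ := hV.aemeasurable fun n =>
    ((stronglyMeasurable_predictableVariation n.le_succ).mono (𝒢.le n)).aemeasurable
  refine tendsto_integral_of_forall_tendsto_setIntegral_lt hL.restrict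
    (fun n => (hE.isMartingaleDiff n).aestronglyMeasurable_cexp_sum.restrict)
    (fun n => .of_forall fun ω => (Complex.norm_exp_ofReal_mul_I _).le)
    (integrable_exp_neg_half hL hL_nonneg).ofReal.restrict fun N => ?_
  have hlt : NullMeasurableSet {ω | L ω < N} μ := nullMeasurableSet_lt hL aemeasurable_const
  rw [Measure.restrict_restrict₀ (hlt.mono_ac Measure.absolutelyContinuous_restrict)]
  exact hE.tendsto_setIntegral_cexp_of_lt N.cast_nonneg hV (hlt.inter hH.nullMeasurableSet)
    fun ω hω => hω.1

end IsLindebergArray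

end LimitLaw

section UniformIntegrability

variable {Ω ι : Type*} {mΩ : MeasurableSpace Ω} {μ : Measure Ω} {p : ENNReal}

lemma exists_forall_measure_nnnorm_ge_le {Y : ι → Ω → ℝ} (hp : p ≠ 0) (hp' : p ≠ ⊤)
    (hY : ∀ i, AEStronglyMeasurable (Y i) μ) {M : NNReal} (hM : ∀ i, eLpNorm (Y i) p μ ≤ M)
    {δ : ENNReal} (hδ : 0 < δ) : ∃ C : NNReal, ∀ i, μ {ω | C ≤ ‖Y i ω‖₊} ≤ δ := by
  have hp_pos : 0 < p.toReal := ENNReal.toReal_pos hp hp'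
  have hlim : Tendsto (fun C : NNReal => ((C : ENNReal)⁻¹ * M) ^ p.toReal) atTop (nhds 0) := by
    have hinv : Tendsto (fun C : NNReal => ((C : ENNReal)⁻¹ * M)) atTop (nhds 0) := by
      simpa using ENNReal.Tendsto.mul_const
        (tendsto_inv_iff.2 (ENNReal.tendsto_coe_nhds_top.2 tendsto_id)) (.inr ENNReal.coe_ne_top)
    simpa [hp_pos] using hinv.ennrpow_const p.toReal
  obtain ⟨C, hC, hC_pos⟩ := ((hlim.eventually_le_const hδ).and (eventually_gt_atTop 0)).exists
  refine ⟨C, fun i => le_trans ?_ hC⟩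
  calc μ {ω | C ≤ ‖Y i ω‖₊} = μ {ω | (C : ENNReal) ≤ ‖Y i ω‖ₑ} := by
        simp only [enorm_eq_nnnorm, ENNReal.coe_le_coe]
    _ ≤ (C : ENNReal)⁻¹ ^ p.toReal * eLpNorm (Y i) p μ ^ p.toReal :=
        meas_ge_le_mul_pow_eLpNorm_enorm μ hp hp' (hY i) (by simpa using hC_pos.ne') (by simp)
    _ ≤ ((C : ENNReal)⁻¹ * M) ^ p.toReal := by
        rw [← ENNReal.mul_rpow_of_nonneg _ _ hp_pos.le]
        gcongr
        exact hM i

lemma uniformIntegrable_condExp_of_uniformIntegrable [IsFiniteMeasure μ] {Y : ι → Ω → ℝ}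
    (hp : 1 ≤ p) (hp' : p ≠ ⊤) (hY : UniformIntegrable Y p μ)
    {m : ι → MeasurableSpace Ω} (hm : ∀ i, m i ≤ mΩ) :
    UniformIntegrable (fun i => μ[Y i | m i]) p μ := by
  have hmeas (i : ι) : AEStronglyMeasurable (μ[Y i | m i]) μ :=
    (stronglyMeasurable_condExp.mono (hm i)).aestronglyMeasurable
  refine uniformIntegrable_of hp hp' hmeas fun ε hε => ?_
  obtain ⟨δ, hδ, hsmall⟩ := hY.2.1 hε
  obtain ⟨M, hM⟩ := hY.2.2
  obtain ⟨C, hC⟩ := exists_forall_measure_nnnorm_ge_le (zero_lt_one.trans_le hp).ne' hp' hmeas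
    (fun i => (eLpNorm_condExp_le_eLpNorm (Y i) hp).trans (hM i)) (ENNReal.ofReal_pos.2 hδ)
  refine ⟨C, fun i => ?_⟩
  have hlevel : MeasurableSet[m i] {ω | C ≤ ‖(μ[Y i | m i]) ω‖₊} :=
    stronglyMeasurable_condExp.nnnorm.measurable measurableSet_Ici
  rw [← eLpNorm_congr_ae (condExp_indicator ((hY.memLp i).integrable hp) hlevel)]
  exact (eLpNorm_condExp_le_eLpNorm _ hp).trans (hsmall i _ (hm i _ hlevel) (hC i))

lemma uniformIntegrable_sub_condExp [IsFiniteMeasure μ] {Y : ι → Ω → ℝ}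
    (hp : 1 ≤ p) (hp' : p ≠ ⊤) (hY : UniformIntegrable Y p μ)
    {m : ι → MeasurableSpace Ω} (hm : ∀ i, m i ≤ mΩ) :
    UniformIntegrable (fun i => Y i - μ[Y i | m i]) p μ := by
  have hcond := uniformIntegrable_condExp_of_uniformIntegrable hp hp' hY hm
  obtain ⟨M, hM⟩ := hY.2.2
  obtain ⟨M', hM'⟩ := hcond.2.2
  refine ⟨fun i => (hY.1 i).sub (hcond.1 i), hY.2.1.sub hcond.2.1 hp hY.1 hcond.1, M + M',
    fun i => ?_⟩
  calc eLpNorm (Y i - μ[Y i | m i]) p μ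
      ≤ eLpNorm (Y i) p μ + eLpNorm (μ[Y i | m i]) p μ :=
        eLpNorm_sub_le (hY.1 i) (hcond.1 i) hp
    _ ≤ (M + M' : NNReal) := by
        rw [ENNReal.coe_add]
        exact add_le_add (hM i) (hM' i)

end UniformIntegrability

section ScaledRows

variable {Ω ι : Type*} {mΩ : MeasurableSpace Ω} {μ : Measure Ω} {𝒢 : Filtration ℕ mΩ}

lemma integral_sq_le_of_eLpNorm_two_le {Z : Ω → ℝ} (hZ : MemLp Z 2 μ) {ε : ℝ} (hε : 0 ≤ ε)
    (h : eLpNorm Z 2 μ ≤ ENNReal.ofReal ε) : ∫ ω, Z ω ^ 2 ∂μ ≤ ε ^ 2 := by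
  rw [hZ.eLpNorm_eq_integral_rpow_norm two_ne_zero ENNReal.ofNat_ne_top,
    ENNReal.ofReal_le_ofReal_iff hε, Real.rpow_inv_le_iff_of_pos (by positivity) hε (by simp)] at h
  simpa using h

lemma exists_forall_integral_sq_indicator_le {Y : ι → Ω → ℝ} (hY : UniformIntegrable Y 2 μ)
    (hmeas : ∀ i, Measurable (Y i)) {ε : ℝ} (hε : 0 < ε) :
    ∃ R : NNReal, ∀ i, ∫ ω, {ω | R ≤ ‖Y i ω‖₊}.indicator (Y i) ω ^ 2 ∂μ ≤ ε := by
  obtain ⟨R, hR⟩ := hY.spec two_ne_zero ENNReal.ofNat_ne_top (Real.sqrt_pos.2 hε)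
  refine ⟨R, fun i => ?_⟩
  have hlevel : MeasurableSet {ω | R ≤ ‖Y i ω‖₊} := (hmeas i).nnnorm measurableSet_Ici
  simpa [Real.sq_sqrt hε.le] using
    integral_sq_le_of_eLpNorm_two_le ((hY.memLp i).indicator hlevel) (Real.sqrt_nonneg ε) (hR i)

lemma integral_min_sq_abs_cube_const_mul_le [IsFiniteMeasure μ] {Z : Ω → ℝ} (hZ : MemLp Z 2 μ)
    (hmeas : Measurable Z) (a : ℝ) (R : NNReal) :
    ∫ ω, min ((a * Z ω) ^ 2) (|a * Z ω| ^ 3) ∂μ ≤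
      a ^ 2 * (∫ ω, {ω | R ≤ ‖Z ω‖₊}.indicator Z ω ^ 2 ∂μ + |a| * (R ^ 3 * μ.real Set.univ)) := by
  have hlevel : MeasurableSet {ω | R ≤ ‖Z ω‖₊} := hmeas.nnnorm measurableSet_Ici
  have htail : Integrable (fun ω => {ω | R ≤ ‖Z ω‖₊}.indicator Z ω ^ 2) μ :=
    (hZ.indicator hlevel).integrable_sq
  have hbound (ω : Ω) : min ((a * Z ω) ^ 2) (|a * Z ω| ^ 3) ≤
      a ^ 2 * ({ω | R ≤ ‖Z ω‖₊}.indicator Z ω ^ 2 + |a| * R ^ 3) := by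
    by_cases hω : R ≤ ‖Z ω‖₊
    · calc min ((a * Z ω) ^ 2) (|a * Z ω| ^ 3) ≤ (a * Z ω) ^ 2 := min_le_left _ _
        _ = a ^ 2 * Z ω ^ 2 := mul_pow _ _ _
        _ ≤ a ^ 2 * ({ω | R ≤ ‖Z ω‖₊}.indicator Z ω ^ 2 + |a| * R ^ 3) := by
          rw [Set.indicator_of_mem (by exact hω)]
          gcongr
          exact le_add_of_nonneg_right (by positivity)
    · have hZR : |Z ω| ≤ R := by
        simpa using NNReal.coe_le_coe.2 (not_le.1 hω).le
      calc min ((a * Z ω) ^ 2) (|a * Z ω| ^ 3) ≤ |a * Z ω| ^ 3 := min_le_right _ _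
        _ = a ^ 2 * (|a| * |Z ω| ^ 3) := by
          rw [abs_mul, mul_pow, pow_succ |a| 2, sq_abs, mul_assoc]
        _ ≤ a ^ 2 * ({ω | R ≤ ‖Z ω‖₊}.indicator Z ω ^ 2 + |a| * R ^ 3) := by
          gcongr
          exact le_add_of_nonneg_of_le (sq_nonneg _) (by gcongr)
  calc ∫ ω, min ((a * Z ω) ^ 2) (|a * Z ω| ^ 3) ∂μ
      ≤ ∫ ω, a ^ 2 * ({ω | R ≤ ‖Z ω‖₊}.indicator Z ω ^ 2 + |a| * R ^ 3) ∂μ :=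
        integral_mono (integrable_min_sq_abs_cube (hZ.const_mul a))
          ((htail.add (integrable_const _)).const_mul _) hbound
    _ = _ := by
        rw [integral_const_mul, integral_add htail (integrable_const _), integral_const,
          smul_eq_mul]
        ring

lemma tendsto_sum_integral_min_sq_abs_cube [IsFiniteMeasure μ] {D : ℕ → Ω → ℝ}
    (hD : UniformIntegrable D 2 μ) (hmeas : ∀ k, Measurable (D k)) {a : ℕ → ℝ}
    (ha : Tendsto a atTop (nhds 0)) {B : ℝ} (hB : ∀ n : ℕ, n * a n ^ 2 ≤ B) :
    Tendsto (fun n => ∑ k ∈ Finset.range n, ∫ ω, min ((a n * D k ω) ^ 2) (|a n * D k ω| ^ 3) ∂μ)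
      atTop (nhds 0) := by
  have hB_nonneg : 0 ≤ B := by simpa using hB 0
  refine tendsto_order.2 ⟨fun δ hδ => .of_forall fun n => hδ.trans_le (by positivity),
    fun δ hδ => ?_⟩
  obtain ⟨ε, hε, hεδ⟩ : ∃ ε > 0, B * ε < δ :=
    ⟨δ / (B + 1), by positivity, by rw [mul_div_assoc', div_lt_iff₀ (by positivity)]; nlinarith⟩
  obtain ⟨R, hR⟩ := exists_forall_integral_sq_indicator_le hD hmeas hε
  set c := R ^ 3 * μ.real Set.univ
  have hlim : Tendsto (fun n => B * (ε + |a n| * c)) atTop (nhds (B * ε)) := by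
    simpa using ((ha.abs.mul_const c).const_add ε).const_mul B
  filter_upwards [hlim.eventually_lt_const hεδ] with n hn
  calc ∑ k ∈ Finset.range n, ∫ ω, min ((a n * D k ω) ^ 2) (|a n * D k ω| ^ 3) ∂μ
      ≤ ∑ _k ∈ Finset.range n, a n ^ 2 * (ε + |a n| * c) := by
        refine Finset.sum_le_sum fun k _ =>
          (integral_min_sq_abs_cube_const_mul_le (hD.memLp k) (hmeas k) (a n) R).trans ?_
        gcongr
        exact hR k
    _ = n * a n ^ 2 * (ε + |a n| * c) := by
        rw [Finset.sum_const, Finset.card_range, nsmul_eq_mul, mul_assoc]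
    _ ≤ B * (ε + |a n| * c) := by
        gcongr
        exact hB n
    _ < δ := hn

lemma IsMartingaleDiff.isLindebergArray_const_mul [IsFiniteMeasure μ] {D : ℕ → Ω → ℝ}
    (hD : IsMartingaleDiff D 𝒢 μ) (hUI : UniformIntegrable D 2 μ) {a : ℕ → ℝ}
    (ha : Tendsto a atTop (nhds 0)) {B : ℝ} (hB : ∀ n : ℕ, n * a n ^ 2 ≤ B) :
    IsLindebergArray (fun n k ω => a n * D k ω) 𝒢 μ where
  isMartingaleDiff n := hD.const_mul (a n)
  tendsto_increment k := .of_forall fun ω => by simpa using ha.mul_const (D k ω)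
  tendsto_predictableVariation k := by
    filter_upwards [ae_all_iff.2 fun n =>
      ae_predictableVariation_const_mul (μ := μ) (𝒢 := 𝒢) (D := D) (a n)] with ω hω
    simp only [hω]
    simpa using (ha.pow 2).mul_const (predictableVariation μ 𝒢 D k ω)
  tendsto_sum_integral := tendsto_sum_integral_min_sq_abs_cube hUI
    (fun k => ((hD.stronglyMeasurable k).mono (𝒢.le _)).measurable) ha hB

end ScaledRows

section GaussianMixture

variable {Ω : Type*} {mΩ : MeasurableSpace Ω} {μ : Measure Ω} {L : Ω → ℝ}

/-- The centred Gaussian law as a kernel in its variance, which is truncated at zero because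
`gaussianReal` takes its variance in `NNReal`. Composed with the law of `L` it is the mixture of the
measures `N(0, L ω)`. -/
noncomputable def centeredGaussianKernel : Kernel ℝ ℝ where
  toFun v := gaussianReal 0 v.toNNReal
  measurable' := measurable_gaussianReal.comp (measurable_const.prodMk measurable_real_toNNReal)

instance : IsMarkovKernel centeredGaussianKernel :=
  ⟨fun v => inferInstanceAs (IsProbabilityMeasure (gaussianReal 0 v.toNNReal))⟩

lemma integral_comp_map {α β F : Type*} [MeasurableSpace α] [MeasurableSpace β]
    [NormedAddCommGroup F] [NormedSpace ℝ F] {κ : Kernel α β} {T : Ω → α} (hT : AEMeasurable T μ)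
    {f : β → F} (hf : StronglyMeasurable f) (hint : Integrable f (κ ∘ₘ μ.map T)) :
    ∫ x, f x ∂(κ ∘ₘ μ.map T) = ∫ ω, ∫ x, f x ∂κ (T ω) ∂μ := by
  rw [Measure.comp_eq_comp_const_apply] at hint ⊢
  rw [Kernel.integral_comp hint, Kernel.const_apply,
    integral_map hT hf.integral_kernel.aestronglyMeasurable]

lemma integral_centeredGaussianKernel_comp_map [IsProbabilityMeasure μ] (hL : AEMeasurable L μ)
    {F : Type*} [NormedAddCommGroup F] [NormedSpace ℝ F] [SecondCountableTopology F]
    {g : ℝ → F} (hg : Continuous g) {C : ℝ} (hC : ∀ x, ‖g x‖ ≤ C) :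
    ∫ x, g x ∂(centeredGaussianKernel ∘ₘ μ.map L) =
      ∫ ω, ∫ x, g x ∂(gaussianReal 0 (L ω).toNNReal) ∂μ := by
  have := Measure.isProbabilityMeasure_map hL
  exact integral_comp_map hL hg.stronglyMeasurable
    (.of_bound hg.aestronglyMeasurable C (.of_forall hC))

lemma integral_cond {F : Type*} [NormedAddCommGroup F] [NormedSpace ℝ F] (H : Set Ω) (f : Ω → F) :
    ∫ ω, f ω ∂μ[|H] = (μ H)⁻¹.toReal • ∫ ω in H, f ω ∂μ := by
  rw [ProbabilityTheory.cond, integral_smul_measure]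

lemma tendsto_integral_gaussianMixture_of_charFun [IsProbabilityMeasure μ] {W : ℕ → Ω → ℝ}
    (hW : ∀ n, AEMeasurable (W n) μ) (hL : AEMeasurable L μ)
    (hchar : ∀ t : ℝ, Tendsto (fun n => ∫ ω, Complex.exp (t * W n ω * Complex.I) ∂μ) atTop
      (nhds (∫ ω, charFun (gaussianReal 0 (L ω).toNNReal) t ∂μ)))
    (g : BoundedContinuousFunction ℝ ℝ) :
    Tendsto (fun n => ∫ ω, g (W n ω) ∂μ) atTop
      (nhds (∫ ω, ∫ x, g x ∂(gaussianReal 0 (L ω).toNNReal) ∂μ)) := by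
  have := Measure.isProbabilityMeasure_map hL
  let law (n : ℕ) : ProbabilityMeasure ℝ := ⟨μ.map (W n), Measure.isProbabilityMeasure_map (hW n)⟩
  let mixture : ProbabilityMeasure ℝ := ⟨centeredGaussianKernel ∘ₘ μ.map L, inferInstance⟩
  have hconv : Tendsto law atTop (nhds mixture) := by
    refine ProbabilityMeasure.tendsto_of_tendsto_charFun fun t => ?_
    simp only [law, mixture, ProbabilityMeasure.coe_mk, charFun_apply_real] at hchar ⊢
    rw [integral_centeredGaussianKernel_comp_map hL (by fun_prop) (C := 1) fun x => by
      rw [← Complex.ofReal_mul, Complex.norm_exp_ofReal_mul_I]]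
    refine (hchar t).congr fun n => ?_
    rw [integral_map (hW n) (by fun_prop)]
  have hint := ProbabilityMeasure.tendsto_iff_forall_integral_tendsto.1 hconv g
  simp only [law, mixture, ProbabilityMeasure.coe_mk] at hint
  rw [integral_centeredGaussianKernel_comp_map hL g.continuous g.norm_coe_le_norm] at hint
  refine hint.congr fun n => ?_
  rw [integral_map (hW n) (by fun_prop)]

lemma stableGaussLimit_of_tendsto_setIntegral_cexp [IsFiniteMeasure μ] {W : ℕ → Ω → ℝ}
    (hW : ∀ n, AEMeasurable (W n) μ) (hL : AEMeasurable L μ)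
    (hchar : ∀ (t : ℝ) {H : Set Ω}, MeasurableSet H →
      Tendsto (fun n => ∫ ω in H, Complex.exp (t * W n ω * Complex.I) ∂μ) atTop
        (nhds (∫ ω in H, charFun (gaussianReal 0 (L ω).toNNReal) t ∂μ))) :
    StableGaussLimit μ W L := by
  intro H hH hH0 g
  have := cond_isProbabilityMeasure hH0
  refine tendsto_integral_gaussianMixture_of_charFun
    (fun n => (hW n).mono_ac cond_absolutelyContinuous) (hL.mono_ac cond_absolutelyContinuous)
    (fun t => ?_) g
  simp only [integral_cond]
  exact (hchar t hH).const_smul _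

end GaussianMixture

section MartingaleLimit

variable {Ω : Type*} {mΩ : MeasurableSpace Ω} {μ : Measure Ω} {𝒢 : Filtration ℕ mΩ}

lemma tendstoInMeasure_const_mul {f : ℕ → Ω → ℝ} {g : Ω → ℝ} (h : TendstoInMeasure μ f atTop g)
    (c : ℝ) : TendstoInMeasure μ (fun n ω => c * f n ω) atTop (fun ω => c * g ω) := by
  rcases eq_or_ne c 0 with rfl | hc
  · intro ε hε
    simp [hε.ne']
  · rw [tendstoInMeasure_iff_norm] at h ⊢
    intro ε hε
    have hc_pos : 0 < |c| := abs_pos.2 hc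
    simpa only [← mul_sub, norm_mul, Real.norm_eq_abs c, div_le_iff₀' hc_pos] using
      h (ε / |c|) (by positivity)

lemma charFun_gaussianReal_zero_toNNReal {v : ℝ} (hv : 0 ≤ v) (t : ℝ) :
    charFun (gaussianReal 0 v.toNNReal) t = (Real.exp (-(t ^ 2 * v / 2)) : ℂ) := by
  rw [charFun_gaussianReal, Real.coe_toNNReal v hv, Complex.ofReal_exp]
  push_cast
  ring_nf

lemma IsMartingaleDiff.stableGaussLimit [IsFiniteMeasure μ] {D : ℕ → Ω → ℝ} {L : Ω → ℝ}
    (hD : IsMartingaleDiff D 𝒢 μ) (hUI : UniformIntegrable D 2 μ)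
    (hV : TendstoInMeasure μ (fun n ω => predictableVariation μ 𝒢 D n ω / n) atTop L) :
    StableGaussLimit μ (fun n ω => (∑ k ∈ Finset.range n, D k ω) / √n) L := by
  have hVn (n : ℕ) : StronglyMeasurable (predictableVariation μ 𝒢 D n) :=
    (stronglyMeasurable_predictableVariation n.le_succ).mono (𝒢.le n)
  have hVn_meas (n : ℕ) : AEMeasurable (fun ω => predictableVariation μ 𝒢 D n ω / n) μ :=
    ((hVn n).measurable.div_const _).aemeasurable
  have hL : AEMeasurable L μ := hV.aemeasurable hVn_meas
  have hL_nonneg : ∀ᵐ ω ∂μ, 0 ≤ L ω := ae_nonneg_of_tendstoInMeasure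
    (fun n => ae_predictableVariation_nonneg.mono fun _ h => div_nonneg (h n) n.cast_nonneg) hV
  have hS (n : ℕ) : AEMeasurable (fun ω => (∑ k ∈ Finset.range n, D k ω) / √n) μ :=
    (((hD.stronglyMeasurable_sum n).mono (𝒢.le n)).measurable.div_const _).aemeasurable
  refine stableGaussLimit_of_tendsto_setIntegral_cexp hS hL fun t H hH => ?_
  have hsqrt : Tendsto (fun n : ℕ => t / √n) atTop (nhds 0) :=
    tendsto_const_nhds.div_atTop (Real.tendsto_sqrt_atTop.comp tendsto_natCast_atTop_atTop)
  have hrows : IsLindebergArray (fun n k ω => t / √n * D k ω) 𝒢 μ :=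
    hD.isLindebergArray_const_mul hUI hsqrt (B := t ^ 2) fun n => by
      rw [div_pow, Real.sq_sqrt n.cast_nonneg, mul_div_assoc']
      exact div_le_of_le_mul₀ n.cast_nonneg (sq_nonneg t) (mul_comm _ _).le
  have hvar : TendstoInMeasure μ
      (fun n : ℕ => predictableVariation μ 𝒢 (fun k ω => t / √n * D k ω) n) atTop
      (fun ω => t ^ 2 * L ω) := by
    refine (tendstoInMeasure_const_mul hV (t ^ 2)).congr_left fun n => ?_
    filter_upwards [ae_predictableVariation_const_mul (μ := μ) (𝒢 := 𝒢) (D := D) (t / √n)]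
      with ω hω
    rw [hω, div_pow, Real.sq_sqrt n.cast_nonneg, mul_div_assoc', div_mul_eq_mul_div]
  have hlim := hrows.tendsto_setIntegral_cexp hvar hH
  rw [integral_congr_ae ((ae_restrict_of_ae hL_nonneg).mono fun ω hω =>
    charFun_gaussianReal_zero_toNNReal hω t)]
  refine hlim.congr fun n => integral_congr_ae (.of_forall fun ω => ?_)
  simp only [← Finset.mul_sum]
  push_cast
  ring_nf

end MartingaleLimit

section Innovations

variable {Ω : Type*} {mΩ : MeasurableSpace Ω} {μ : Measure Ω} [IsFiniteMeasure μ]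
  {𝒢 : Filtration ℕ mΩ} {Y : ℕ → Ω → ℝ} {Vf Vf2 : Ω → ℝ}

lemma isMartingaleDiff_sub_condExp (hadp : ∀ k, StronglyMeasurable[𝒢 (k + 1)] (Y k))
    (hY : ∀ k, MemLp (Y k) 2 μ) : IsMartingaleDiff (fun k => Y k - μ[Y k | 𝒢 k]) 𝒢 μ where
  stronglyMeasurable k :=
    (hadp k).sub (stronglyMeasurable_condExp.mono (𝒢.mono k.le_succ))
  memLp k := (hY k).sub ((hY k).condExp one_le_two)
  condExp_eq_zero k := by
    have hsub := condExp_sub ((hY k).integrable one_le_two)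
      (integrable_condExp (m := 𝒢 k) (f := Y k)) (𝒢 k)
    rwa [condExp_of_stronglyMeasurable (𝒢.le k) stronglyMeasurable_condExp integrable_condExp,
      sub_self] at hsub

lemma ae_tendsto_predictableVariation_sub_condExp_div (hY : ∀ k, MemLp (Y k) 2 μ)
    (hVf : ∀ᵐ ω ∂μ, Tendsto (fun k => (μ[Y k | 𝒢 k]) ω) atTop (nhds (Vf ω)))
    (hVf2 : ∀ᵐ ω ∂μ, Tendsto (fun k => (μ[fun ω' => Y k ω' ^ 2 | 𝒢 k]) ω) atTop (nhds (Vf2 ω))) :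
    ∀ᵐ ω ∂μ, Tendsto (fun n : ℕ =>
      predictableVariation μ 𝒢 (fun k => Y k - μ[Y k | 𝒢 k]) n ω / n) atTop
      (nhds (Vf2 ω - Vf ω ^ 2)) := by
  have hcondVar := ae_all_iff.2 fun k => condVar_ae_eq_condExp_sq_sub_sq_condExp (𝒢.le k) (hY k)
  filter_upwards [hcondVar, hVf, hVf2] with ω hcondVar hVf hVf2
  have hlim : Tendsto (fun k => (Var[Y k; μ | 𝒢 k]) ω) atTop (nhds (Vf2 ω - Vf ω ^ 2)) :=
    (hVf2.sub (hVf.pow 2)).congr fun k => (hcondVar k).symm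
  exact hlim.cesaro.congr fun n => by rw [inv_mul_eq_div]; rfl

end Innovations

section IdenticallyDistributed

variable {Ω E : Type*} {mΩ : MeasurableSpace Ω} [MeasurableSpace E] {μ : Measure Ω}
  [IsFiniteMeasure μ] {𝒢 : Filtration ℕ mΩ} {X : ℕ → Ω → E}

namespace IsCID

lemma identDistrib (hcid : IsCID μ 𝒢 X) (hX : ∀ n, 1 ≤ n → Measurable (X n)) {n : ℕ}
    (hn : 1 ≤ n) : IdentDistrib (X n) (X 1) μ μ := by
  refine ⟨(hX n hn).aemeasurable, (hX 1 le_rfl).aemeasurable, Measure.ext fun A hA => ?_⟩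
  have hcond : μ[fun ω => A.indicator (1 : E → ℝ) (X n ω) | 𝒢 0] =ᵐ[μ]
      μ[fun ω => A.indicator (1 : E → ℝ) (X 1 ω) | 𝒢 0] :=
    hcid (A.indicator 1) (measurable_one.indicator hA)
      ⟨1, fun x => by by_cases hx : x ∈ A <;> simp [hx]⟩ 0 n hn
  have hint : ∫ ω, A.indicator (1 : E → ℝ) (X n ω) ∂μ =
      ∫ ω, A.indicator (1 : E → ℝ) (X 1 ω) ∂μ := by
    rw [← integral_condExp (𝒢.le 0), integral_congr_ae hcond, integral_condExp (𝒢.le 0)]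
  have hmeasure {j : ℕ} (hj : 1 ≤ j) :
      ∫ ω, A.indicator (1 : E → ℝ) (X j ω) ∂μ = μ.real (X j ⁻¹' A) :=
    integral_indicator_one (hX j hj hA)
  rw [hmeasure hn, hmeasure le_rfl, measureReal_eq_measureReal_iff] at hint
  rwa [Measure.map_apply (hX n hn) hA, Measure.map_apply (hX 1 le_rfl) hA]

lemma uniformIntegrable_comp (hcid : IsCID μ 𝒢 X) (hX : ∀ n, 1 ≤ n → Measurable (X n))
    {f : E → ℝ} (hf : Measurable f) {p : ENNReal} (hp : 1 ≤ p) (hp' : p ≠ ⊤)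
    (hfX : MemLp (f ∘ X 1) p μ) : UniformIntegrable (fun n => f ∘ X (n + 1)) p μ :=
  MemLp.uniformIntegrable_of_identDistrib (j := 0) hp hp' hfX fun n =>
    (hcid.identDistrib hX n.succ_pos).comp hf

end IsCID

end IdenticallyDistributed

theorem stmt18_general {Ω : Type*} {mΩ : MeasurableSpace Ω} (μ : Measure Ω) [IsFiniteMeasure μ]
    (𝒢 : Filtration ℕ mΩ) (Y : ℕ → Ω → ℝ) (hadp : ∀ n, 1 ≤ n → Measurable[𝒢 n] (Y n))
    (hY : UniformIntegrable (fun n => Y (n + 1)) 2 μ)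
    (Vf Vf2 : Ω → ℝ)
    (hVf : ∀ᵐ ω ∂μ, Tendsto (fun n => (μ[Y (n + 1) | 𝒢 n]) ω) atTop (nhds (Vf ω)))
    (hVf2 : ∀ᵐ ω ∂μ, Tendsto (fun n => (μ[fun ω' => Y (n + 1) ω' ^ 2 | 𝒢 n]) ω) atTop
      (nhds (Vf2 ω))) :
    StableGaussLimit μ
      (fun n ω => (∑ k ∈ Finset.Icc 1 n, (Y k ω - (μ[Y k | 𝒢 (k - 1)]) ω)) / √n)
      (fun ω => Vf2 ω - Vf ω ^ 2) := by
  have hD : IsMartingaleDiff (fun k => Y (k + 1) - μ[Y (k + 1) | 𝒢 k]) 𝒢 μ :=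
    isMartingaleDiff_sub_condExp (fun k => (hadp (k + 1) k.succ_pos).stronglyMeasurable) hY.memLp
  have hUI : UniformIntegrable (fun k => Y (k + 1) - μ[Y (k + 1) | 𝒢 k]) 2 μ :=
    uniformIntegrable_sub_condExp one_le_two ENNReal.ofNat_ne_top hY 𝒢.le
  have hV := tendstoInMeasure_of_tendsto_ae
    (fun n => (((stronglyMeasurable_predictableVariation n.le_succ).mono
      (𝒢.le n)).measurable.div_const _).aestronglyMeasurable)
    (ae_tendsto_predictableVariation_sub_condExp_div hY.memLp hVf hVf2)
  have hreindex (n : ℕ) (ω : Ω) :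
      ∑ k ∈ Finset.Icc 1 n, (Y k ω - (μ[Y k | 𝒢 (k - 1)]) ω) =
        ∑ k ∈ Finset.range n, (Y (k + 1) - μ[Y (k + 1) | 𝒢 k]) ω := by
    rw [Finset.range_eq_Ico, ← Finset.Ico_add_one_right_eq_Icc]
    exact (Finset.sum_Ico_add' (fun k => Y k ω - (μ[Y k | 𝒢 (k - 1)]) ω) 0 n 1).symm
  simp only [hreindex]
  exact hD.stableGaussLimit hUI hV

/-- CLT (case II): if `(X n)` is `𝒢`-c.i.d. and `f (X 1)`, `f (X 1)²` are integrable, then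
`B n = n^{-1/2} ∑_{k=1}^n (f (X k) − E[f (X k) | 𝒢 (k-1)])` converges stably with
representing measure `N(0, V_{f²} − (V_f)²)`. -/
theorem stmt18 {Ω E : Type*} {mΩ : MeasurableSpace Ω} [MeasurableSpace E]
    (μ : Measure Ω) [IsProbabilityMeasure μ] (𝒢 : Filtration ℕ mΩ) (X : ℕ → Ω → E)
    (hadp : ∀ n, 1 ≤ n → Measurable[𝒢 n] (X n))
    (hcid : IsCID μ 𝒢 X)
    (f : E → ℝ) (hf : Measurable f)
    (hint1 : Integrable (fun ω => f (X 1 ω)) μ)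
    (hint2 : Integrable (fun ω => (f (X 1 ω)) ^ 2) μ)
    (Vf Vf2 : Ω → ℝ)
    (hVf : ∀ᵐ ω ∂μ, Tendsto (fun n => (μ[(fun ω' => f (X (n + 1) ω')) | 𝒢 n]) ω)
      atTop (nhds (Vf ω)))
    (hVf2 : ∀ᵐ ω ∂μ, Tendsto (fun n => (μ[(fun ω' => (f (X (n + 1) ω')) ^ 2) | 𝒢 n]) ω)
      atTop (nhds (Vf2 ω))) :
    StableGaussLimit μ
      (fun n ω => (∑ k ∈ Finset.Icc 1 n,
        (f (X k ω) - (μ[(fun ω' => f (X k ω')) | 𝒢 (k - 1)]) ω)) / Real.sqrt n)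
      (fun ω => Vf2 ω - (Vf ω) ^ 2) := by
  have hX (n : ℕ) (hn : 1 ≤ n) : Measurable (X n) := (hadp n hn).mono (𝒢.le n) le_rfl
  exact stmt18_general μ 𝒢 (fun n => f ∘ X n) (fun n hn => hf.comp (hadp n hn))
    (hcid.uniformIntegrable_comp hX hf one_le_two ENNReal.ofNat_ne_top <|
      (memLp_two_iff_integrable_sq (hf.comp (hX 1 le_rfl)).aestronglyMeasurable).2 hint2)
    Vf Vf2 hVf hVf2
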